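/- Let n ≥ 1 and let X ∈ Mat_n(ℂ) be Hermitian. Then X is an abelian self-commutator in Mat_n(ℂ) (i.e. there exists Y ∈ Mat_n(ℂ) with (Y Y*)(Y* Y) = (Y* Y)(Y Y*) and X = Y Y* − Y* Y) if and only if there exist Hermitian matrices A₁, A₂ ∈ Mat_n(ℂ) such that A₁A₂ = A₂A₁, X = A₁ − A₂, and A₂ = U A₁ U* for some unitary matrix U ∈ Mat_n(ℂ). -/

import Mathlib

/-!
If `X = Y Yᴴ - Yᴴ Y` with `Y Yᴴ` and `Yᴴ Y` commuting, take `A₁ = Y Yᴴ` and `A₂ = Yᴴ Y`. These have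
the same characteristic polynomial, and Hermitian matrices with equal characteristic polynomials
are unitarily equivalent by the spectral theorem (`exists_unitary_conj_of_charpoly_eq`).

Conversely, adding a scalar `c` to both `A₁` and `A₂` changes neither their difference, nor their
commutation, nor the unitary `U` relating them, so `A₁ + c` may be assumed positive; by the spectral
theorem it is then `B * B` for a Hermitian `B` (`exists_isHermitian_sq_eq_add_smul_one`). The
matrix `Y = B Uᴴ` satisfies `Y Yᴴ = B² = A₁ + c` and `Yᴴ Y = U B² Uᴴ = A₂ + c`.
-/

open scoped Matrix

theorem exists_unitary_conj_of_charpoly_eq {n : ℕ} {A B : Matrix (Fin n) (Fin n) ℂ}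
    (hA : A.IsHermitian) (hB : B.IsHermitian) (h : A.charpoly = B.charpoly) :
    ∃ U : Matrix (Fin n) (Fin n) ℂ, U * Uᴴ = 1 ∧ Uᴴ * U = 1 ∧ B = U * A * Uᴴ := by
  have he := (hA.eigenvalues_eq_eigenvalues_iff hB).2 h
  have sA := hA.spectral_theorem
  have sB := hB.spectral_theorem
  rw [Unitary.conjStarAlgAut_apply] at sA sB
  rw [← he] at sB
  generalize hA.eigenvectorUnitary = V at sA
  generalize hB.eigenvectorUnitary = W at sB
  generalize Matrix.diagonal ((RCLike.ofReal : ℝ → ℂ) ∘ hA.eigenvalues) = D at sA sB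
  -- `U = W Vᴴ` carries the eigenbasis of `A` to that of `B`.
  refine ⟨((W * star V : Matrix.unitaryGroup (Fin n) ℂ) : Matrix (Fin n) (Fin n) ℂ),
    Unitary.coe_mul_star_self _, Unitary.coe_star_mul_self _, ?_⟩
  rw [← Matrix.star_eq_conjTranspose, sA, sB]
  have hV : star (V : Matrix (Fin n) (Fin n) ℂ) * V = 1 := Unitary.coe_star_mul_self V
  simp only [Submonoid.coe_mul, Unitary.coe_star, star_mul, star_star, mul_assoc]
  rw [← mul_assoc (star (V : Matrix (Fin n) (Fin n) ℂ)) V (star _), hV, one_mul,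
    ← mul_assoc (star (V : Matrix (Fin n) (Fin n) ℂ)) V, hV, one_mul]

theorem exists_isHermitian_sq_eq_add_smul_one {n : ℕ} {A : Matrix (Fin n) (Fin n) ℂ}
    (hA : A.IsHermitian) :
    ∃ (c : ℂ) (B : Matrix (Fin n) (Fin n) ℂ), B.IsHermitian ∧ B * B = A + c • 1 := by
  -- The sum of the absolute values of the eigenvalues makes `A + c` positive.
  set c : ℝ := ∑ i, |hA.eigenvalues i| with hc
  have hpos : ∀ i, 0 ≤ hA.eigenvalues i + c := fun i => by
    have h1 := Finset.single_le_sum (f := fun i => |hA.eigenvalues i|)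
      (fun j _ => abs_nonneg _) (Finset.mem_univ i)
    have h2 := neg_abs_le (hA.eigenvalues i)
    linarith
  have sA := hA.spectral_theorem
  rw [Unitary.conjStarAlgAut_apply] at sA
  set V : Matrix (Fin n) (Fin n) ℂ := (hA.eigenvectorUnitary : Matrix (Fin n) (Fin n) ℂ)
  have hV : star V * V = 1 := Unitary.coe_star_mul_self hA.eigenvectorUnitary
  have hV' : V * star V = 1 := Unitary.coe_mul_star_self hA.eigenvectorUnitary
  set S : Matrix (Fin n) (Fin n) ℂ :=
    Matrix.diagonal fun i => ((Real.sqrt (hA.eigenvalues i + c) : ℝ) : ℂ) with hS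
  have hSS : S * S = Matrix.diagonal (RCLike.ofReal ∘ hA.eigenvalues) + (c : ℂ) • 1 := by
    rw [hS, Matrix.diagonal_mul_diagonal, Matrix.smul_one_eq_diagonal, Matrix.diagonal_add]
    congr 1
    funext i
    rw [← Complex.ofReal_mul, Real.mul_self_sqrt (hpos i)]
    simp
  have hSh : star S = S := by
    rw [hS, Matrix.star_eq_conjTranspose, Matrix.diagonal_conjTranspose]
    congr 1
    funext i
    simp
  refine ⟨c, V * S * star V, ?_, ?_⟩
  · change star _ = _
    rw [star_mul, star_mul, star_star, hSh, mul_assoc]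
  · calc V * S * star V * (V * S * star V) = V * S * (star V * V) * S * star V := by
          simp only [mul_assoc]
      _ = V * (S * S) * star V := by rw [hV, mul_one]; simp only [mul_assoc]
      _ = A + (c : ℂ) • 1 := by
          rw [hSS, mul_add, add_mul, ← sA, mul_smul_comm, smul_mul_assoc, mul_one, hV']

/-- A Hermitian matrix `X` in `Mat_n(ℂ)` is an abelian self-commutator if
and only if `X = A₁ - A₂` for commuting Hermitian `A₁, A₂` which are unitarily equivalent. -/
theorem abelian_self_commutator_iff_commuting_unitarily_equivalent_difference
    (n : ℕ) (hn : 1 ≤ n) (X : Matrix (Fin n) (Fin n) ℂ) (hX : X.IsHermitian) :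
    (∃ Y : Matrix (Fin n) (Fin n) ℂ,
      (Y * Yᴴ) * (Yᴴ * Y) = (Yᴴ * Y) * (Y * Yᴴ) ∧
      X = Y * Yᴴ - Yᴴ * Y) ↔
    (∃ A₁ A₂ : Matrix (Fin n) (Fin n) ℂ,
      A₁.IsHermitian ∧ A₂.IsHermitian ∧
      A₁ * A₂ = A₂ * A₁ ∧
      X = A₁ - A₂ ∧
      ∃ U : Matrix (Fin n) (Fin n) ℂ,
        U * Uᴴ = 1 ∧ Uᴴ * U = 1 ∧ A₂ = U * A₁ * Uᴴ) := by
  constructor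
  · rintro ⟨Y, hY, hXY⟩
    have h1 := Matrix.isHermitian_mul_conjTranspose_self Y
    have h2 := Matrix.isHermitian_conjTranspose_mul_self Y
    exact ⟨Y * Yᴴ, Yᴴ * Y, h1, h2, hY, hXY,
      exists_unitary_conj_of_charpoly_eq h1 h2 (Matrix.charpoly_mul_comm _ _)⟩
  · rintro ⟨A₁, A₂, h1, -, hcomm, hXA, U, hU, hU', hA₂⟩
    obtain ⟨c, B, hB, hBB⟩ := exists_isHermitian_sq_eq_add_smul_one h1
    have e1 : B * Uᴴ * (B * Uᴴ)ᴴ = A₁ + c • 1 := by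
      rw [Matrix.conjTranspose_mul, Matrix.conjTranspose_conjTranspose, hB.eq, mul_assoc,
        ← mul_assoc Uᴴ, hU', one_mul, hBB]
    have e2 : (B * Uᴴ)ᴴ * (B * Uᴴ) = A₂ + c • 1 := by
      rw [Matrix.conjTranspose_mul, Matrix.conjTranspose_conjTranspose, hB.eq, mul_assoc,
        ← mul_assoc B, hBB, hA₂, add_mul, mul_add, smul_mul_assoc, one_mul, mul_smul_comm, hU,
        mul_assoc]
    refine ⟨B * Uᴴ, ?_, ?_⟩
    · rw [e1, e2]
      simp only [add_mul, mul_add, smul_add, hcomm, smul_mul_assoc, mul_smul_comm, one_mul, mul_one]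
      abel
    · rw [e1, e2, hXA]
      abel
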